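/- arXiv:2602.08927 — 2 statements merged into one kernel-verified Lean document; each statement's English description precedes it below -/
import Mathlib

section
/- In the setting of the histogram-compression lemma: let f̃ ∈ D_{a,b} be a constrained Grenander estimator based on (x_1,…,x_n), V := log(b/a), and k ≥ 1. The compressed histogram h constructed by grouping bins of f̃ into maximal blocks on which the log-heights vary by at most V/k, assigning to each block its leftmost height, and renormalizing by a factor α so that h integrates to 1, satisfies | log f̃(x) − log h(x) | ≤ 2V/k for every x ∈ [0,1]; in particular the normalizer satisfies |log α| ≤ V/k. -/
/-!
A bin of a block has a height between `exp (-c) * W` and `W`, where `W` is the leftmost height of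
the block and `c` the tolerance on the log-heights. Integrating, the mass of the histogram `f` lies
between `exp (-c) * S` and `S`, where `S` is the mass of the unnormalized compressed histogram. As
`α * S` is the mass of `f`, the normalizer `α` lies between `exp (-c)` and `1`. Hence
`log f - log W` and `log α` both lie in `[-c, 0]`, and their difference `log f - log (α * W)` lies
in `[-c, c]`: the two errors have opposite effects, which gives `c` where the triangle inequality
gives only `2 * c`.
-/

open MeasureTheory ProbabilityTheory Real Set Filter

noncomputable section

/-- `f` is a non-increasing probability density on `[0,1]`
(behavior pinned on `[0,1)`, as histograms use the convention `1{t_{j-1} ≤ x < t_j}`). -/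
def IsMonoDensity (f : ℝ → ℝ) : Prop :=
  (∀ u ∈ Set.Ico (0:ℝ) 1, 0 ≤ f u) ∧
  (∀ u ∈ Set.Ico (0:ℝ) 1, ∀ v ∈ Set.Ico (0:ℝ) 1, u ≤ v → f v ≤ f u) ∧
  (∫ u in (0:ℝ)..1, f u) = 1

/-- The class `D_{a,b}` of non-increasing densities bounded between `a` and `b`. -/
def IsMonoDensityAB (a b : ℝ) (f : ℝ → ℝ) : Prop :=
  IsMonoDensity f ∧ ∀ u ∈ Set.Ico (0:ℝ) 1, a ≤ f u ∧ f u ≤ b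

section Histogram

variable {X M : Type*} [LinearOrder X] [AddCommMonoid M] {m : ℕ} {t : ℕ → X} {w : ℕ → M}

/-- The histogram with bins `[t 0, t 1), …, [t (m - 1), t m)` and heights `w 1, …, w m`: the form
of the constrained Grenander estimator. Heights are numbered from `1`, as in the paper, so that
`w (i + 1)` belongs to `[t i, t (i + 1))`. -/
def histogram (m : ℕ) (t : ℕ → X) (w : ℕ → M) (u : X) : M :=
  ∑ i ∈ Finset.range m, if t i ≤ u ∧ u < t (i + 1) then w (i + 1) else 0

lemma histogram_eq_of_mem_Ico (ht : MonotoneOn t (Iic m)) {j : ℕ} (hj : j < m) {u : X}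
    (hu : u ∈ Ico (t j) (t (j + 1))) : histogram m t w u = w (j + 1) := by
  rw [histogram, Finset.sum_eq_single_of_mem j (Finset.mem_range.2 hj), if_pos ⟨hu.1, hu.2⟩]
  intro i hi hij
  have hi : i < m := Finset.mem_range.1 hi
  refine if_neg fun hu' => hij ?_
  have hij' : i < j + 1 := ht.reflect_lt hi.le hj (hu'.1.trans_lt hu.2)
  have hji' : j < i + 1 := ht.reflect_lt hj.le hi (hu.1.trans_lt hu'.2)
  omega

lemma exists_mem_Ioc_histogram_eq (ht : MonotoneOn t (Iic m)) {p q : ℕ} (hp : p ≤ m) (hq : q ≤ m)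
    {u : X} (hu : u ∈ Ico (t p) (t q)) : ∃ j ∈ Ioc p q, histogram m t w u = w j := by
  have hu' : u ∈ Ico (t 0) (t m) :=
    ⟨(ht m.zero_le hp p.zero_le).trans hu.1, hu.2.trans_le (ht hq self_mem_Iic hq)⟩
  obtain ⟨j, hj, huj⟩ := mem_iUnion₂.1 (Ico_subset_biUnion_Ico m t hu')
  have hjm : j < m := Finset.mem_range.1 hj
  have hpj : p < j + 1 := ht.reflect_lt hp hjm (hu.1.trans_lt huj.2)
  have hjq : j < q := ht.reflect_lt hjm.le hq (huj.1.trans_lt hu.2)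
  exact ⟨j + 1, ⟨hpj, hjq⟩, histogram_eq_of_mem_Ico ht hjm huj⟩

end Histogram

lemma log_sub_log_le_iff_exp_neg_mul_le {x y c : ℝ} (hx : 0 < x) (hy : 0 < y) :
    log x - log y ≤ c ↔ exp (-c) * x ≤ y := by
  rw [← log_le_log_iff (by positivity) hy, log_mul (exp_ne_zero _) hx.ne', log_exp]
  constructor <;> intro h <;> linarith

lemma abs_log_sub_log_mul_le {y W α c : ℝ} (hW : 0 < W) (hy : y ∈ Icc (exp (-c) * W) W)
    (hα : α ∈ Icc (exp (-c)) 1) : |log y - log (α * W)| ≤ c := by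
  have hα0 : 0 < α := (exp_pos _).trans_le hα.1
  have hy0 : 0 < y := (mul_pos (exp_pos _) hW).trans_le hy.1
  rw [abs_sub_le_iff, log_sub_log_le_iff_exp_neg_mul_le hy0 (mul_pos hα0 hW),
    log_sub_log_le_iff_exp_neg_mul_le (mul_pos hα0 hW) hy0]
  constructor
  · calc exp (-c) * y ≤ exp (-c) * W := by gcongr; exact hy.2
      _ ≤ α * W := by gcongr; exact hα.1
  · calc exp (-c) * (α * W) ≤ exp (-c) * (1 * W) := by gcongr; exact hα.2
      _ ≤ y := by rw [one_mul]; exact hy.1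

lemma abs_log_le_of_mem_Icc {α c : ℝ} (hα : α ∈ Icc (exp (-c)) 1) : |log α| ≤ c := by
  have hα0 : 0 < α := (exp_pos _).trans_le hα.1
  rw [abs_of_nonpos (log_nonpos hα0.le hα.2), neg_le, le_log_iff_exp_le hα0]
  exact hα.1

lemma histogram_mem_Icc_of_log_sub_log_le {X : Type*} [LinearOrder X] {m : ℕ} {t : ℕ → X}
    {w : ℕ → ℝ} {c : ℝ} (ht : MonotoneOn t (Iic m)) (hw : AntitoneOn w (Icc 1 m))
    (hwpos : ∀ i ∈ Icc 1 m, 0 < w i) {p q : ℕ} (hp : p ≤ m) (hq : q ≤ m)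
    (hc : ∀ j ∈ Ioc p q, log (w (p + 1)) - log (w j) ≤ c) {u : X} (hu : u ∈ Ico (t p) (t q)) :
    histogram m t w u ∈ Icc (exp (-c) * w (p + 1)) (w (p + 1)) := by
  obtain ⟨j, hj, huj⟩ := exists_mem_Ioc_histogram_eq (w := w) ht hp hq hu
  have hpm : p + 1 ∈ Icc 1 m := ⟨p.succ_pos, hj.1.trans_le (hj.2.trans hq)⟩
  have hjm : j ∈ Icc 1 m := ⟨p.succ_pos.trans_le hj.1, hj.2.trans hq⟩
  rw [huj]
  exact ⟨(log_sub_log_le_iff_exp_neg_mul_le (hwpos _ hpm) (hwpos j hjm)).1 (hc j hj),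
    hw hpm hjm hj.1⟩

section Normalizer

variable {L : ℕ} {s W : ℕ → ℝ} {f : ℝ → ℝ}

lemma integral_le_sum_mul_sub (hs : MonotoneOn s (Iic L))
    (hf : IntervalIntegrable f volume (s 0) (s L))
    (hfW : ∀ ℓ < L, ∀ u ∈ Ico (s ℓ) (s (ℓ + 1)), f u ≤ W ℓ) :
    ∫ u in s 0..s L, f u ≤ ∑ ℓ ∈ Finset.range L, W ℓ * (s (ℓ + 1) - s ℓ) := by
  have hle : ∀ ℓ < L, s ℓ ≤ s (ℓ + 1) := fun ℓ hℓ => hs hℓ.le hℓ ℓ.le_succ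
  have hint : ∀ ℓ < L, IntervalIntegrable f volume (s ℓ) (s (ℓ + 1)) := fun ℓ hℓ => by
    refine hf.mono_set ?_
    rw [uIcc_of_le (hle ℓ hℓ), uIcc_of_le (hs L.zero_le self_mem_Iic L.zero_le)]
    exact Icc_subset_Icc (hs L.zero_le hℓ.le ℓ.zero_le) (hs hℓ self_mem_Iic hℓ)
  rw [← intervalIntegral.sum_integral_adjacent_intervals hint]
  refine Finset.sum_le_sum fun ℓ hℓ => ?_
  have hℓ : ℓ < L := Finset.mem_range.1 hℓ
  calc ∫ u in s ℓ..s (ℓ + 1), f u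
      ≤ ∫ _ in s ℓ..s (ℓ + 1), W ℓ :=
        intervalIntegral.integral_mono_on_of_le_Ioo (hle ℓ hℓ) (hint ℓ hℓ)
          intervalIntegrable_const fun u hu => hfW ℓ hℓ u (Ioo_subset_Ico_self hu)
    _ = W ℓ * (s (ℓ + 1) - s ℓ) := by
        rw [intervalIntegral.integral_const, smul_eq_mul, mul_comm]

lemma sum_mul_sub_le_integral (hs : MonotoneOn s (Iic L))
    (hf : IntervalIntegrable f volume (s 0) (s L))
    (hWf : ∀ ℓ < L, ∀ u ∈ Ico (s ℓ) (s (ℓ + 1)), W ℓ ≤ f u) :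
    ∑ ℓ ∈ Finset.range L, W ℓ * (s (ℓ + 1) - s ℓ) ≤ ∫ u in s 0..s L, f u := by
  have hneg := integral_le_sum_mul_sub (W := fun ℓ => -W ℓ) hs hf.neg
    fun ℓ hℓ u hu => neg_le_neg (hWf ℓ hℓ u hu)
  simpa only [Pi.neg_apply, intervalIntegral.integral_neg, neg_mul, Finset.sum_neg_distrib,
    neg_le_neg_iff] using hneg

lemma normalizer_mem_Icc {c α : ℝ} (hs : MonotoneOn s (Iic L))
    (hfW : ∀ ℓ < L, ∀ u ∈ Ico (s ℓ) (s (ℓ + 1)), f u ∈ Icc (exp (-c) * W ℓ) (W ℓ))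
    (hmass : 0 < ∫ u in s 0..s L, f u)
    (hα : α * ∑ ℓ ∈ Finset.range L, W ℓ * (s (ℓ + 1) - s ℓ) = ∫ u in s 0..s L, f u) :
    α ∈ Icc (exp (-c)) 1 := by
  -- A non-integrable function has integral `0`.
  have hf : IntervalIntegrable f volume (s 0) (s L) :=
    intervalIntegral.intervalIntegrable_of_integral_ne_zero hmass.ne'
  have hlower := sum_mul_sub_le_integral hs hf fun ℓ hℓ u hu => (hfW ℓ hℓ u hu).1
  have hupper := integral_le_sum_mul_sub hs hf fun ℓ hℓ u hu => (hfW ℓ hℓ u hu).2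
  have hS := hmass.trans_le hupper
  simp only [mul_assoc, ← Finset.mul_sum] at hlower
  rw [← hα] at hlower hupper
  exact ⟨le_of_mul_le_mul_right hlower hS, (mul_le_iff_le_one_left hS).1 hupper⟩

end Normalizer

theorem stmt_6_general {m L : ℕ} {w t : ℕ → ℝ} {i' : ℕ → ℕ} {f h : ℝ → ℝ} {p q c α : ℝ}
    (ht0 : t 0 = p) (htm : t m = q) (ht : ∀ i < m, t i ≤ t (i + 1))
    (hw : ∀ i, 1 ≤ i → i + 1 ≤ m → w (i + 1) ≤ w i) (hwpos : ∀ i ∈ Icc 1 m, 0 < w i)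
    (hf : ∀ u ∈ Ico p q, f u = histogram m t w u) (hmass : 0 < ∫ u in p..q, f u)
    (hi'0 : i' 0 = 0) (hi'L : i' L = m) (hi' : ∀ ℓ < L, i' ℓ ≤ i' (ℓ + 1))
    (hblock : ∀ ℓ < L, ∀ j, i' ℓ < j → j ≤ i' (ℓ + 1) → log (w (i' ℓ + 1)) - log (w j) ≤ c)
    (hnorm : α * ∑ ℓ ∈ Finset.range L, w (i' ℓ + 1) * (t (i' (ℓ + 1)) - t (i' ℓ)) =
      ∫ u in p..q, f u)
    (hh : ∀ ℓ < L, ∀ u, t (i' ℓ) ≤ u → u < t (i' (ℓ + 1)) → h u = α * w (i' ℓ + 1)) :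
    (∀ u ∈ Ico p q, |log (f u) - log (h u)| ≤ c) ∧ |log α| ≤ c := by
  subst ht0 htm hi'L
  have ht : MonotoneOn t (Iic (i' L)) :=
    monotoneOn_of_le_add_one ordConnected_Iic fun i _ _ hi => ht i hi
  have hw : AntitoneOn w (Icc 1 (i' L)) :=
    antitoneOn_of_add_one_le ordConnected_Icc fun i _ hi hi' => hw i hi.1 hi'.2
  have hi' : MonotoneOn i' (Iic L) :=
    monotoneOn_of_le_add_one ordConnected_Iic fun ℓ _ _ hℓ => hi' ℓ hℓ
  have hi'le : MapsTo i' (Iic L) (Iic (i' L)) := fun ℓ hℓ => hi' hℓ self_mem_Iic hℓ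
  have hs : MonotoneOn (t ∘ i') (Iic L) := ht.comp hi' hi'le
  have hfblock : ∀ ℓ < L, ∀ u ∈ Ico (t (i' ℓ)) (t (i' (ℓ + 1))),
      f u ∈ Icc (exp (-c) * w (i' ℓ + 1)) (w (i' ℓ + 1)) := fun ℓ hℓ u hu => by
    rw [hf u ⟨(ht (Nat.zero_le _) (hi'le hℓ.le) (Nat.zero_le _)).trans hu.1,
      hu.2.trans_le (hs hℓ self_mem_Iic hℓ)⟩]
    exact histogram_mem_Icc_of_log_sub_log_le ht hw hwpos (hi'le hℓ.le) (hi'le hℓ)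
      (fun j hj => hblock ℓ hℓ j hj.1 hj.2) hu
  -- This makes the left end `t 0` the first breakpoint `(t ∘ i') 0` of the blocks.
  rw [← hi'0] at hf hmass hnorm ⊢
  have hα : α ∈ Icc (exp (-c)) 1 := normalizer_mem_Icc hs hfblock hmass hnorm
  refine ⟨fun u hu => ?_, ?_⟩
  · obtain ⟨ℓ, hℓ, huℓ⟩ := mem_iUnion₂.1 (Ico_subset_biUnion_Ico L (t ∘ i') hu)
    have hℓ : ℓ < L := Finset.mem_range.1 hℓ
    have hlt : i' ℓ < i' (ℓ + 1) :=
      ht.reflect_lt (hi'le hℓ.le) (hi'le hℓ) (huℓ.1.trans_lt huℓ.2)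
    have hW : 0 < w (i' ℓ + 1) := hwpos _ ⟨(i' ℓ).succ_pos, hlt.trans_le (hi'le hℓ)⟩
    rw [hh ℓ hℓ u huℓ.1 huℓ.2]
    exact abs_log_sub_log_mul_le hW (hfblock ℓ hℓ u huℓ) hα
  · exact abs_log_le_of_mem_Icc hα

/-- pointwise accuracy of the compressed histogram.
Let `ftil ∈ D_{a,b}` be a constrained Grenander estimator based on `x_1, …, x_n`,
represented as a monotone histogram with weights `b ≥ w_1 ≥ … ≥ w_m ≥ a` and breakpoints
`0 = t_0 < … < t_m = 1`. Let `V = log(b/a)`, `k ≥ 1`. Group bins into maximal blocks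
`i'_0 = 0 < i'_1 < … < i'_L = m`, where `i'_ℓ = max{j > i'_{ℓ-1} : log w_{i'_{ℓ-1}+1} - log w_j ≤ V/k}`,
give the `ℓ`-th block the height `α · w_{i'_{ℓ-1}+1}`, with `α > 0` the normalizer making
the result `h` integrate to `1`. Then `|log ftil x - log h x| ≤ 2V/k` on `[0,1)`, and
`|log α| ≤ V/k`. -/
theorem stmt_6 (n : ℕ) (hn : 1 ≤ n) (a b : ℝ) (ha : 0 < a) (hab : a ≤ b)
    (x : ℕ → ℝ) (hx : ∀ i < n, x i ∈ Set.Icc (0:ℝ) 1)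
    (k : ℕ) (hk : 1 ≤ k)
    (ftil : ℝ → ℝ) (hftil : IsMonoDensityAB a b ftil)
    (hmax : ∀ f : ℝ → ℝ, IsMonoDensityAB a b f →
      ∑ i ∈ Finset.range n, Real.log (f (x i)) ≤ ∑ i ∈ Finset.range n, Real.log (ftil (x i)))
    -- histogram representation of `ftil`
    (m : ℕ) (hm : 1 ≤ m) (w t : ℕ → ℝ)
    (ht0 : t 0 = 0) (htm : t m = 1) (htmono : ∀ i < m, t i < t (i + 1))
    (hwmono : ∀ i, 1 ≤ i → i + 1 ≤ m → w (i + 1) ≤ w i)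
    (hwbound : ∀ i, 1 ≤ i → i ≤ m → a ≤ w i ∧ w i ≤ b)
    (hrep : ∀ u ∈ Set.Ico (0:ℝ) 1,
      ftil u = ∑ i ∈ Finset.range m, if t i ≤ u ∧ u < t (i + 1) then w (i + 1) else 0)
    -- the maximal-block structure
    (L : ℕ) (hL : 1 ≤ L) (i' : ℕ → ℕ) (hi'0 : i' 0 = 0) (hi'L : i' L = m)
    (hblock : ∀ ℓ < L,
      i' ℓ < i' (ℓ + 1) ∧ i' (ℓ + 1) ≤ m ∧
      (∀ j, i' ℓ < j → j ≤ i' (ℓ + 1) →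
        Real.log (w (i' ℓ + 1)) - Real.log (w j) ≤ Real.log (b / a) / k) ∧
      (i' (ℓ + 1) = m ∨
        Real.log (b / a) / k < Real.log (w (i' ℓ + 1)) - Real.log (w (i' (ℓ + 1) + 1))))
    -- the normalizer and the compressed histogram
    (α : ℝ) (hα : 0 < α)
    (hnorm : α * ∑ ℓ ∈ Finset.range L, w (i' ℓ + 1) * (t (i' (ℓ + 1)) - t (i' ℓ)) = 1)
    (h : ℝ → ℝ)
    (hh : ∀ ℓ < L, ∀ u : ℝ, t (i' ℓ) ≤ u → u < t (i' (ℓ + 1)) → h u = α * w (i' ℓ + 1)) :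
    (∀ u ∈ Set.Ico (0:ℝ) 1,
        |Real.log (ftil u) - Real.log (h u)| ≤ 2 * Real.log (b / a) / k) ∧
      |Real.log α| ≤ Real.log (b / a) / k := by
  obtain ⟨hlog, hlogα⟩ := stmt_6_general ht0 htm (fun i hi => (htmono i hi).le) hwmono
    (fun i hi => ha.trans_le (hwbound i hi.1 hi.2).1) hrep (hftil.1.2.2.symm ▸ one_pos) hi'0 hi'L
    (fun ℓ hℓ => (hblock ℓ hℓ).1.le) (fun ℓ hℓ => (hblock ℓ hℓ).2.2.1)
    (hnorm.trans hftil.1.2.2.symm) hh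
  exact ⟨fun u hu => (hlog u hu).trans
    (by linarith [mul_div_assoc 2 (log (b / a)) k, abs_nonneg (log α)]), hlogα⟩
end
end

section
/- Fix n ∈ ℕ, a sample x_1,…,x_n ∈ (0,1), and 0 < a ≤ b < ∞. Let 0 = x_{(0)} < x_{(1)} < … < x_{(r_n)} < x_{(r_n+1)} = 1 denote the distinct order statistics of the sample (augmented by 0 and 1), with r_n ≤ n. Then a maximizer of Σ_{i=1}^n log f(x_i) over f ∈ D_{a,b} can be chosen to be a monotone histogram of the form f(u) = θ_j for u ∈ (x_{(j)}, x_{(j+1)}], j = 0,…,r_n, with b ≥ θ_0 ≥ θ_1 ≥ … ≥ θ_{r_n} ≥ a. Equivalently: for every f ∈ D_{a,b} there exists a piecewise-constant f̃ ∈ D_{a,b} with knots at the order statistics such that Σ_{i=1}^n log f̃(x_i) ≥ Σ_{i=1}^n log f(x_i). -/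
/-!
Replace `f` by its mean over each cell `(x_(j), x_(j+1)]` cut out by the distinct sample points
together with `0` and `1`. The index `j` of the cell containing `u` is the number of distinct sample
points below `u`, so the cells are the fibres of a monotone function with values in `ℕ`. Averaging
over fibres preserves the integral and every bound, and it preserves monotonicity because the fibres
of a monotone function are ordered. A sample point is the right endpoint of its cell, where a
non-increasing `f` is smallest, so there the mean is at least the value of `f`, and each term of the
log-likelihood can only grow.
-/

open MeasureTheory ProbabilityTheory Real Set Filter

noncomputable section

lemma hasSum_setIntegral_preimage_singleton {α ι E : Type*} [MeasurableSpace α] [MeasurableSpace ι]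
    [MeasurableSingletonClass ι] [Countable ι] [NormedAddCommGroup E] [NormedSpace ℝ E]
    {μ : Measure α} {p : α → ι} {f : α → E} (hp : Measurable p) (hf : Integrable f μ) :
    HasSum (fun i => ∫ t in p ⁻¹' {i}, f t ∂μ) (∫ t, f t ∂μ) := by
  simpa only [← preimage_iUnion, iUnion_of_singleton, preimage_univ, setIntegral_univ] using
    hasSum_integral_iUnion (fun i => hp (measurableSet_singleton i)) (pairwise_disjoint_fiber p)
      hf.integrableOn

section FiberAverage

variable {α ι E : Type*} [MeasurableSpace α]
  [NormedAddCommGroup E] [NormedSpace ℝ E] {μ : Measure α} {p : α → ι}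

/-- The function constant on the fibres of `p` whose value on each fibre is the mean of `f` there,
i.e. the conditional expectation of `f` given `p` when `p` takes countably many values. Unlike
`MeasureTheory.condExp`, it is defined at every point. Its value is `0` on fibres of measure
zero. -/
def fiberAverage (μ : Measure α) (p : α → ι) (f : α → E) (u : α) : E :=
  ⨍ t in p ⁻¹' {p u}, f t ∂μ

lemma fiberAverage_congr {f : α → E} {u v : α} (h : p u = p v) :
    fiberAverage μ p f u = fiberAverage μ p f v := by
  simp only [fiberAverage, h]

lemma eqOn_fiberAverage_preimage_singleton (μ : Measure α) (p : α → ι) (f : α → E) (i : ι) :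
    EqOn (fiberAverage μ p f) (fun _ => ⨍ t in p ⁻¹' {i}, f t ∂μ) (p ⁻¹' {i}) := by
  rintro u rfl
  rfl

variable [MeasurableSpace ι] [MeasurableSingletonClass ι] [IsFiniteMeasure μ]

lemma integrableOn_fiberAverage_preimage_singleton (hp : Measurable p) (f : α → E) (i : ι) :
    IntegrableOn (fiberAverage μ p f) (p ⁻¹' {i}) μ :=
  (integrableOn_congr_fun (eqOn_fiberAverage_preimage_singleton μ p f i)
    (hp (measurableSet_singleton i))).2 integrableOn_const

lemma setIntegral_fiberAverage_preimage_singleton [CompleteSpace E] (hp : Measurable p)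
    (f : α → E) (i : ι) :
    ∫ t in p ⁻¹' {i}, fiberAverage μ p f t ∂μ = ∫ t in p ⁻¹' {i}, f t ∂μ := by
  rw [setIntegral_congr_fun (hp (measurableSet_singleton i))
    (eqOn_fiberAverage_preimage_singleton μ p f i), setIntegral_setAverage]

lemma setIntegral_norm_fiberAverage_preimage_singleton_le (hp : Measurable p) (f : α → E) (i : ι) :
    ∫ t in p ⁻¹' {i}, ‖fiberAverage μ p f t‖ ∂μ ≤ ∫ t in p ⁻¹' {i}, ‖f t‖ ∂μ :=
  calc ∫ t in p ⁻¹' {i}, ‖fiberAverage μ p f t‖ ∂μ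
      = μ.real (p ⁻¹' {i}) • ‖⨍ t in p ⁻¹' {i}, f t ∂μ‖ := by
        rw [setIntegral_congr_fun (hp (measurableSet_singleton i)) fun t ht =>
          congrArg norm (eqOn_fiberAverage_preimage_singleton μ p f i ht), setIntegral_const]
    _ = ‖∫ t in p ⁻¹' {i}, f t ∂μ‖ := by
        rw [← measure_smul_setAverage f (measure_ne_top μ _), norm_smul,
          Real.norm_of_nonneg measureReal_nonneg, smul_eq_mul]
    _ ≤ ∫ t in p ⁻¹' {i}, ‖f t‖ ∂μ := norm_integral_le_integral_norm f

lemma integrable_fiberAverage [Countable ι] {f : α → E} (hp : Measurable p)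
    (hf : Integrable f μ) : Integrable (fiberAverage μ p f) μ := by
  have hsum : Summable fun i => ∫ t in p ⁻¹' {i}, ‖fiberAverage μ p f t‖ ∂μ :=
    (hasSum_setIntegral_preimage_singleton hp hf.norm).summable.of_nonneg_of_le
      (fun _ => integral_nonneg fun _ => norm_nonneg _)
      (setIntegral_norm_fiberAverage_preimage_singleton_le hp f)
  have hunion := integrableOn_iUnion_of_summable_integral_norm
    (integrableOn_fiberAverage_preimage_singleton hp f) hsum
  rwa [← preimage_iUnion, iUnion_of_singleton, preimage_univ, integrableOn_univ] at hunion

lemma integral_fiberAverage [CompleteSpace E] [Countable ι] {f : α → E} (hp : Measurable p)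
    (hf : Integrable f μ) : ∫ t, fiberAverage μ p f t ∂μ = ∫ t, f t ∂μ := by
  have hsum := hasSum_setIntegral_preimage_singleton hp (integrable_fiberAverage hp hf)
  simp only [setIntegral_fiberAverage_preimage_singleton hp] at hsum
  exact hsum.unique (hasSum_setIntegral_preimage_singleton hp hf)

lemma fiberAverage_mem [CompleteSpace E] {f : α → E} {C : Set E} {u : α} (hp : Measurable p)
    (hf : Integrable f μ) (hu : μ (p ⁻¹' {p u}) ≠ 0) (hC : Convex ℝ C) (hCc : IsClosed C)
    (h : ∀ᵐ t ∂μ, p t = p u → f t ∈ C) : fiberAverage μ p f u ∈ C :=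
  hC.set_average_mem hCc hu (measure_ne_top μ _)
    ((ae_restrict_iff' (hp (measurableSet_singleton _))).2 h) hf.integrableOn

end FiberAverage

lemma antitoneOn_fiberAverage {α ι : Type*} [MeasurableSpace α] [LinearOrder α]
    [MeasurableSpace ι] [MeasurableSingletonClass ι] [PartialOrder ι] {μ : Measure α}
    [IsFiniteMeasure μ] {p : α → ι} {f : α → ℝ} {s : Set α} (hp : Measurable p) (hpm : Monotone p)
    (hf : Integrable f μ) (hs : ∀ᵐ t ∂μ, t ∈ s) (hfs : AntitoneOn f s) :
    AntitoneOn (fiberAverage μ p f) {u | μ (p ⁻¹' {p u}) ≠ 0} := by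
  intro u hu v hv huv
  rw [mem_ofPred_eq] at hu hv
  rcases (hpm huv).eq_or_lt with heq | hlt
  · exact (fiberAverage_congr heq).ge
  · have hle : ∀ t ∈ s, p t = p v → f t ≤ fiberAverage μ p f u := fun t ht htv =>
      mem_Ici.1 <| fiberAverage_mem hp hf hu (convex_Ici (f t)) isClosed_Ici <|
        hs.mono fun w hw hwu => hfs hw ht (hpm.reflect_lt (hwu.trans_lt (hlt.trans_eq htv.symm))).le
    exact mem_Iic.1 <| fiberAverage_mem hp hf hv (convex_Iic _) isClosed_Iic (hs.mono hle)

section KnotCount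

open scoped Topology

variable {α : Type*} [LinearOrder α] {S : Finset α} {u v : α}

/-- The number of knots in `S` strictly below `u`. When the knots are the distinct order statistics
`x_(1) < … < x_(r)`, this is the index `j` with `u ∈ (x_(j), x_(j+1)]`. -/
def knotCount (S : Finset α) (u : α) : ℕ :=
  (S.filter (· < u)).card

lemma monotone_knotCount (S : Finset α) : Monotone (knotCount S) := fun _ _ huv =>
  Finset.card_le_card (Finset.monotone_filter_right S fun _ _ hs => hs.trans_le huv)

lemma knotCount_eq_of_forall_not (huv : u ≤ v) (h : ∀ s ∈ S, ¬(u ≤ s ∧ s < v)) :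
    knotCount S u = knotCount S v :=
  congrArg Finset.card <| Finset.filter_congr fun s hs =>
    ⟨fun hsu => hsu.trans_le huv, fun hsv => not_le.1 fun hus => h s hs ⟨hus, hsv⟩⟩

lemma knotCount_lt_of_mem (hu : u ∈ S) (huv : u < v) : knotCount S u < knotCount S v := by
  refine Finset.card_lt_card (Finset.ssubset_iff_of_subset
    (Finset.monotone_filter_right S fun _ _ hs => hs.trans huv) |>.2 ⟨u, ?_, ?_⟩)
  · exact Finset.mem_filter.2 ⟨hu, huv⟩
  · simp only [Finset.mem_filter, lt_irrefl, and_false, not_false_eq_true]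

lemma le_of_knotCount_eq (hu : u ∈ S) (h : knotCount S v = knotCount S u) : v ≤ u :=
  not_lt.1 fun huv => (knotCount_lt_of_mem hu huv).ne' h

variable [TopologicalSpace α] [OrderClosedTopology α]

lemma measurable_knotCount [MeasurableSpace α] [OpensMeasurableSpace α] (S : Finset α) :
    Measurable (knotCount S) := by
  have hsum : knotCount S = fun u => ∑ s ∈ S, if s < u then 1 else 0 :=
    funext fun _ => Finset.card_filter _ _
  rw [hsum]
  exact Finset.measurable_fun_sum S fun s _ =>
    Measurable.ite measurableSet_Ioi measurable_const measurable_const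

lemma eventually_knotCount_eq_nhdsLT (S : Finset α) (u : α) :
    ∀ᶠ t in 𝓝[<] u, knotCount S t = knotCount S u := by
  have hknots : ∀ᶠ t in 𝓝[<] u, ∀ s ∈ S, s < u → s < t :=
    (Finset.eventually_all S).2 fun s _ => by
      by_cases hsu : s < u
      · filter_upwards [Ioo_mem_nhdsLT hsu] with t ht _ using ht.1
      · exact Eventually.of_forall fun _ h => absurd h hsu
  filter_upwards [hknots, self_mem_nhdsWithin] with t ht htu
  exact knotCount_eq_of_forall_not (le_of_lt htu) fun s hs h => (ht s hs h.2).not_ge h.1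

lemma eventually_knotCount_eq_nhdsGT (hu : u ∉ S) :
    ∀ᶠ t in 𝓝[>] u, knotCount S t = knotCount S u := by
  have hknots : ∀ᶠ t in 𝓝[>] u, ∀ s ∈ S, u < s → t < s :=
    (Finset.eventually_all S).2 fun s _ => by
      by_cases hus : u < s
      · filter_upwards [Ioo_mem_nhdsGT hus] with t ht _ using ht.2
      · exact Eventually.of_forall fun _ h => absurd h hus
  filter_upwards [hknots, self_mem_nhdsWithin] with t ht hut
  refine (knotCount_eq_of_forall_not (le_of_lt hut) fun s hs h => ?_).symm
  exact (ht s hs (h.1.lt_of_ne (ne_of_mem_of_not_mem hs hu).symm)).not_gt h.2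

end KnotCount

section KnotAverage

open scoped Topology

variable {S : Finset ℝ} {f : ℝ → ℝ} {u : ℝ}

/-- The histogram on the unit interval with knots `S` obtained from `f` by averaging over each
cell. The measure is restricted to the open interval because membership in `D` does not constrain
the value at `1`. -/
def knotAverage (S : Finset ℝ) (f : ℝ → ℝ) : ℝ → ℝ :=
  fiberAverage (volume.restrict (Ioo 0 1)) (knotCount S) f

lemma volume_restrict_Ioo_knotCount_ne_zero (hS : 0 ∉ S) (hu : u ∈ Icc 0 1) :
    volume.restrict (Ioo 0 1) (knotCount S ⁻¹' {knotCount S u}) ≠ 0 := by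
  obtain ⟨v, hv, hvu⟩ : ∃ v ∈ Ioc (0 : ℝ) 1, knotCount S v = knotCount S u := by
    rcases hu.1.eq_or_lt with rfl | hu0
    · exact ((eventually_of_mem (Ioc_mem_nhdsGT zero_lt_one) fun _ => id).and
        (eventually_knotCount_eq_nhdsGT hS)).exists
    · exact ⟨u, ⟨hu0, hu.2⟩, rfl⟩
  have hcell : knotCount S ⁻¹' {knotCount S u} ∩ Ioo 0 1 ∈ 𝓝[<] v :=
    inter_mem ((eventually_knotCount_eq_nhdsLT S v).mono fun _ ht => ht.trans hvu)
      (Ioo_mem_nhdsLT_of_mem hv)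
  obtain ⟨l, hl, hsub⟩ := (mem_nhdsLT_iff_exists_Ioo_subset' hv.1).1 hcell
  rw [Measure.restrict_apply (measurable_knotCount S (measurableSet_singleton _))]
  exact (measure_pos_of_superset hsub
    (isOpen_Ioo.measure_pos volume (nonempty_Ioo.2 hl)).ne').ne'

lemma knotAverage_mem {C : Set ℝ} (hS : 0 ∉ S) (hf : IntegrableOn f (Ioo 0 1)) (hu : u ∈ Icc 0 1)
    (hC : Convex ℝ C) (hCc : IsClosed C)
    (h : ∀ t ∈ Ioo 0 1, knotCount S t = knotCount S u → f t ∈ C) :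
    knotAverage S f u ∈ C :=
  fiberAverage_mem (measurable_knotCount S) hf (volume_restrict_Ioo_knotCount_ne_zero hS hu) hC hCc
    (ae_restrict_of_forall_mem measurableSet_Ioo h)

lemma antitoneOn_knotAverage (hS : 0 ∉ S) (hf : IntegrableOn f (Ioo 0 1))
    (hanti : AntitoneOn f (Ioo 0 1)) : AntitoneOn (knotAverage S f) (Icc 0 1) :=
  (antitoneOn_fiberAverage (measurable_knotCount S) (monotone_knotCount S) hf
    (ae_restrict_mem measurableSet_Ioo) hanti).mono
    fun _ => volume_restrict_Ioo_knotCount_ne_zero hS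

lemma intervalIntegral_knotAverage (S : Finset ℝ) (hf : IntegrableOn f (Ioo 0 1)) :
    ∫ t in (0 : ℝ)..1, knotAverage S f t = ∫ t in (0 : ℝ)..1, f t := by
  simp only [intervalIntegral.integral_of_le zero_le_one, integral_Ioc_eq_integral_Ioo]
  exact integral_fiberAverage (measurable_knotCount S) hf

lemma le_knotAverage_of_mem (hS : 0 ∉ S) (hf : IntegrableOn f (Ioo 0 1))
    (hanti : AntitoneOn f (Ioo 0 1)) (hu : u ∈ S) (hu01 : u ∈ Ioo 0 1) : f u ≤ knotAverage S f u :=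
  knotAverage_mem hS hf (Ioo_subset_Icc_self hu01) (convex_Ici (f u)) isClosed_Ici
    fun _ ht htu => hanti ht hu01 (le_of_knotCount_eq hu htu)

end KnotAverage

namespace IsMonoDensity

variable {S : Finset ℝ} {f : ℝ → ℝ}

lemma antitoneOn_Ioo (hf : IsMonoDensity f) : AntitoneOn f (Ioo 0 1) := fun u hu v hv =>
  hf.2.1 u (Ioo_subset_Ico_self hu) v (Ioo_subset_Ico_self hv)

-- The integral of a non-integrable function is `0` by convention, which is not the mass of `f`.
lemma integrableOn_Ioo (hf : IsMonoDensity f) : IntegrableOn f (Ioo 0 1) :=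
  (intervalIntegrable_iff_integrableOn_Ioo_of_le zero_le_one).1 <|
    intervalIntegral.intervalIntegrable_of_integral_ne_zero (hf.2.2.trans_ne one_ne_zero)

lemma knotAverage (hS : 0 ∉ S) (hf : IsMonoDensity f) : IsMonoDensity (knotAverage S f) := by
  refine ⟨fun u hu => ?nonneg, fun u hu v hv => ?antitone, ?mass⟩
  case nonneg =>
    exact knotAverage_mem hS hf.integrableOn_Ioo (Ico_subset_Icc_self hu) (convex_Ici 0)
      isClosed_Ici fun t ht _ => hf.1 t (Ioo_subset_Ico_self ht)
  case antitone =>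
    exact antitoneOn_knotAverage hS hf.integrableOn_Ioo hf.antitoneOn_Ioo (Ico_subset_Icc_self hu)
      (Ico_subset_Icc_self hv)
  case mass => exact (intervalIntegral_knotAverage S hf.integrableOn_Ioo).trans hf.2.2

end IsMonoDensity

lemma IsMonoDensityAB.knotAverage {a b : ℝ} {S : Finset ℝ} {f : ℝ → ℝ} (hS : 0 ∉ S)
    (hf : IsMonoDensityAB a b f) : IsMonoDensityAB a b (knotAverage S f) :=
  ⟨hf.1.knotAverage hS, fun _ hu =>
    knotAverage_mem hS hf.1.integrableOn_Ioo (Ico_subset_Icc_self hu) (convex_Icc a b) isClosed_Icc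
      fun t ht _ => hf.2 t (Ioo_subset_Ico_self ht)⟩

/-- histogram form of the constrained Grenander estimator.
Fix a sample `x_1, …, x_n ∈ (0,1)` and `0 < a ≤ b`. For every `f ∈ D_{a,b}` there is a
`ftil ∈ D_{a,b}` that is piecewise constant with knots at the (distinct) order statistics
of the sample — i.e. `ftil` is constant on every interval `(u, v] ⊆ (0,1]` containing no
sample point in `[u, v)` — whose log-likelihood is at least that of `f`. In particular a
maximizer of the log-likelihood over `D_{a,b}` can be chosen to be such a monotone
histogram (with heights automatically in `[b, a]`-range and non-increasing, since
`ftil ∈ D_{a,b}`). -/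
theorem stmt_11 (n : ℕ) (a b : ℝ) (ha : 0 < a) (hab : a ≤ b)
    (x : ℕ → ℝ) (hx : ∀ i < n, x i ∈ Set.Ioo (0:ℝ) 1) :
    ∀ f : ℝ → ℝ, IsMonoDensityAB a b f →
      ∃ ftil : ℝ → ℝ, IsMonoDensityAB a b ftil ∧
        (∀ u v : ℝ, 0 < u → u ≤ v → v ≤ 1 →
          (∀ i < n, ¬(u ≤ x i ∧ x i < v)) → ftil u = ftil v) ∧
        ∑ i ∈ Finset.range n, Real.log (f (x i)) ≤
          ∑ i ∈ Finset.range n, Real.log (ftil (x i)) := by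
  intro f hf
  set S : Finset ℝ := (Finset.range n).image x with hSdef
  have hS : 0 ∉ S := by
    simp only [hSdef, Finset.mem_image, Finset.mem_range, not_exists, not_and]
    exact fun i hi => (hx i hi).1.ne'
  refine ⟨knotAverage S f, hf.knotAverage hS, fun u v _ huv _ hknots => ?constant,
    Finset.sum_le_sum fun i hi => ?likelihood⟩
  case constant =>
    refine fiberAverage_congr (knotCount_eq_of_forall_not huv ?_)
    exact Finset.forall_mem_image.2 fun i hi => hknots i (Finset.mem_range.1 hi)
  case likelihood =>
    have hxi := hx i (Finset.mem_range.1 hi)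
    exact Real.log_le_log (ha.trans_le (hf.2 (x i) (Ioo_subset_Ico_self hxi)).1)
      (le_knotAverage_of_mem hS hf.1.integrableOn_Ioo hf.1.antitoneOn_Ioo
        (Finset.mem_image_of_mem x hi) hxi)
end
end
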